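/- Let Q_{k−1}, Q_k : Ω → (S×A → ℝ) be random functions and ε ≥ 0 be such that 𝔼[‖Q_k − 𝒯Q_{k−1}‖₂²] ≤ ε. Then 𝔼[‖Q_k − Q*‖_∞²] ≤ (1 + 2γ²/(1−γ²))·ε + ((γ²+1)/2)·𝔼[‖Q_{k−1} − Q*‖_∞²]. -/

import Mathlib

open MeasureTheory ProbabilityTheory Finset

/-- sup norm of a real function on a finite nonempty type. -/
noncomputable def supNorm {ι : Type*} [Fintype ι] [Nonempty ι] (f : ι → ℝ) : ℝ :=
  Finset.univ.sup' Finset.univ_nonempty (fun i => |f i|)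

/-- squared Euclidean norm of a real function on a finite type. -/
def sqNorm {ι : Type*} [Fintype ι] (f : ι → ℝ) : ℝ := ∑ i, (f i) ^ 2

/-- Bellman optimality operator. -/
noncomputable def bellman {S A : Type*} [Fintype S] [Fintype A] [Nonempty A]
    (P : S → A → S → ℝ) (r : S → A → ℝ) (γ : ℝ) (Q : S × A → ℝ) : S × A → ℝ :=
  fun x => r x.1 x.2 + γ * ∑ s' : S, P x.1 x.2 s' *
    Finset.univ.sup' Finset.univ_nonempty (fun a' => Q (s', a'))

/-!
If `y` is moved by a map `T` contracting with factor `γ` towards its fixed point `q`, then the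
triangle inequality gives `d(x, q) ≤ d(x, T y) + γ d(y, q)`. Squaring and absorbing the cross term
by Young's inequality with weight `2 / (1 - γ²)` leaves the factor `γ² + (1 - γ²) / 2 < 1` on
`d(y, q)²`. The Bellman operator is such a contraction in the sup distance, and the sup norm is at
most the Euclidean one.
-/

open scoped NNReal

section SupNorm

variable {ι : Type*} [Fintype ι]

theorem supNorm_eq_norm [Nonempty ι] (f : ι → ℝ) : supNorm f = ‖f‖ :=
  eq_of_forall_ge_iff fun c => by
    simp only [supNorm, sup'_le_iff, mem_univ, forall_const, pi_norm_le_iff_of_nonempty,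
      Real.norm_eq_abs]

theorem supNorm_sub_eq_dist [Nonempty ι] (f g : ι → ℝ) :
    supNorm (fun i => f i - g i) = dist f g :=
  (supNorm_eq_norm (f - g)).trans (dist_eq_norm f g).symm

theorem norm_sq_le_sqNorm (f : ι → ℝ) : ‖f‖ ^ 2 ≤ sqNorm f := by
  have sqNorm_nonneg : 0 ≤ sqNorm f := sum_nonneg fun i _ => sq_nonneg (f i)
  refine (Real.le_sqrt (norm_nonneg f) sqNorm_nonneg).mp ?_
  refine (pi_norm_le_iff_of_nonneg (Real.sqrt_nonneg _)).mpr fun i => Real.abs_le_sqrt ?_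
  exact single_le_sum (f := fun i => f i ^ 2) (fun j _ => sq_nonneg (f j)) (mem_univ i)

theorem dist_sq_le_sqNorm_sub (f g : ι → ℝ) : dist f g ^ 2 ≤ sqNorm (fun i => f i - g i) :=
  dist_eq_norm f g ▸ norm_sq_le_sqNorm (f - g)

end SupNorm

theorem sup'_sub_sup'_le {ι R : Type*} [AddCommGroup R] [SemilatticeSup R] [IsOrderedAddMonoid R]
    {s : Finset ι} (hs : s.Nonempty) {f g : ι → R} {d : R} (hfg : ∀ i ∈ s, f i - g i ≤ d) :
    s.sup' hs f - s.sup' hs g ≤ d := by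
  refine sub_le_iff_le_add'.mpr (sup'_le hs f fun i hi => ?_)
  calc f i ≤ g i + d := sub_le_iff_le_add'.mp (hfg i hi)
    _ ≤ s.sup' hs g + d := by gcongr; exact le_sup' g hi

theorem abs_sup'_sub_sup'_le {ι R : Type*} [AddCommGroup R] [LinearOrder R] [IsOrderedAddMonoid R]
    {s : Finset ι} (hs : s.Nonempty) {f g : ι → R} {d : R} (hfg : ∀ i ∈ s, |f i - g i| ≤ d) :
    |s.sup' hs f - s.sup' hs g| ≤ d :=
  abs_sub_le_iff.mpr
    ⟨sup'_sub_sup'_le hs fun i hi => (abs_sub_le_iff.mp (hfg i hi)).1,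
      sup'_sub_sup'_le hs fun i hi => (abs_sub_le_iff.mp (hfg i hi)).2⟩

theorem abs_sum_mul_le_sum_abs_mul {ι R : Type*} [Ring R] [LinearOrder R]
    [IsStrictOrderedRing R] {s : Finset ι} {w f : ι → R} {d : R} (hf : ∀ i ∈ s, |f i| ≤ d) :
    |∑ i ∈ s, w i * f i| ≤ (∑ i ∈ s, |w i|) * d :=
  calc |∑ i ∈ s, w i * f i| ≤ ∑ i ∈ s, |w i| * |f i| := by
        simpa only [abs_mul] using abs_sum_le_sum_abs (fun i => w i * f i) s
    _ ≤ ∑ i ∈ s, |w i| * d := by gcongr with i hi; exact hf i hi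
    _ = (∑ i ∈ s, |w i|) * d := (sum_mul s _ d).symm

theorem lipschitzWith_bellman {S A : Type*} [Fintype S] [Fintype A] [Nonempty A]
    {P : S → A → S → ℝ} (hP : ∀ s a, ∑ s', |P s a s'| ≤ 1) (r : S → A → ℝ) (γ : ℝ) :
    LipschitzWith ‖γ‖₊ (bellman P r γ) := by
  refine .of_dist_le_mul fun Q Q' => (dist_pi_le_iff (by positivity)).mpr fun x => ?_
  let V (Q : S × A → ℝ) (s : S) : ℝ := univ.sup' univ_nonempty fun a => Q (s, a)
  have value_sub_le (s : S) : |V Q s - V Q' s| ≤ dist Q Q' :=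
    abs_sup'_sub_sup'_le _ fun a _ => dist_le_pi_dist Q Q' (s, a)
  calc dist (bellman P r γ Q x) (bellman P r γ Q' x)
      = |γ| * |∑ s, P x.1 x.2 s * (V Q s - V Q' s)| := by
        simp only [bellman, V, dist_add_left, Real.dist_eq, ← mul_sub, ← sum_sub_distrib, abs_mul]
    _ ≤ |γ| * ((∑ s, |P x.1 x.2 s|) * dist Q Q') := by
        gcongr
        exact abs_sum_mul_le_sum_abs_mul fun s _ => value_sub_le s
    _ ≤ |γ| * dist Q Q' := by
        gcongr
        exact mul_le_of_le_one_left dist_nonneg (hP x.1 x.2)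

theorem contractingWith_bellman {S A : Type*} [Fintype S] [Fintype A] [Nonempty A]
    {P : S → A → S → ℝ} (hP : ∀ s a, ∑ s', |P s a s'| ≤ 1) (r : S → A → ℝ) {γ : ℝ}
    (hγ : |γ| < 1) : ContractingWith ‖γ‖₊ (bellman P r γ) :=
  ⟨NNReal.coe_lt_coe.mp hγ, lipschitzWith_bellman hP r γ⟩

theorem add_mul_sq_le {K : Type*} [Field K] [LinearOrder K] [IsStrictOrderedRing K]
    {γ : K} (hγ : γ ^ 2 < 1) (a b : K) :
    (a + γ * b) ^ 2 ≤ (1 + 2 * γ ^ 2 / (1 - γ ^ 2)) * a ^ 2 + (γ ^ 2 + 1) / 2 * b ^ 2 := by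
  have gap_pos : 0 < 1 - γ ^ 2 := sub_pos.mpr hγ
  have young : 2 * (γ * a) * b ≤ 2 / (1 - γ ^ 2) * (γ * a) ^ 2 + (2 / (1 - γ ^ 2))⁻¹ * b ^ 2 :=
    two_mul_le_add_mul_sq (div_pos two_pos gap_pos)
  rw [inv_div] at young
  linear_combination young

theorem dist_sq_le_of_dist_le_mul {X : Type*} [PseudoMetricSpace X] {γ : ℝ} (hγ : γ ^ 2 < 1)
    {x y z q : X} (hz : dist z q ≤ γ * dist y q) :
    dist x q ^ 2 ≤
      (1 + 2 * γ ^ 2 / (1 - γ ^ 2)) * dist x z ^ 2 + (γ ^ 2 + 1) / 2 * dist y q ^ 2 :=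
  calc dist x q ^ 2 ≤ (dist x z + γ * dist y q) ^ 2 := by
        gcongr
        exact (dist_triangle x z q).trans (by gcongr)
    _ ≤ _ := add_mul_sq_le hγ _ _

/- The residual enters through a majorant `R`, so that it may be measured in a larger distance than
the one in which `T` contracts. -/
theorem squared_error_one_step_recursion_general {X Ω : Type*} [MetricSpace X] [MeasurableSpace Ω]
    {μ : Measure Ω} {K : ℝ≥0} {T : X → X} (hT : ContractingWith K T) {q : X}
    (hq : Function.IsFixedPt T q) {x y : Ω → X} {R : Ω → ℝ} {ε : ℝ}
    (hR : ∀ᵐ ω ∂μ, dist (x ω) (T (y ω)) ^ 2 ≤ R ω) (hRint : Integrable R μ) (hRε : ∫ ω, R ω ∂μ ≤ ε)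
    (hx : Integrable (fun ω => dist (x ω) q ^ 2) μ)
    (hy : Integrable (fun ω => dist (y ω) q ^ 2) μ) :
    ∫ ω, dist (x ω) q ^ 2 ∂μ ≤
      (1 + 2 * (K : ℝ) ^ 2 / (1 - (K : ℝ) ^ 2)) * ε
        + ((K : ℝ) ^ 2 + 1) / 2 * ∫ ω, dist (y ω) q ^ 2 ∂μ := by
  have hK : (K : ℝ) ^ 2 < 1 := pow_lt_one₀ K.coe_nonneg hT.1 two_ne_zero
  set c : ℝ := 1 + 2 * (K : ℝ) ^ 2 / (1 - (K : ℝ) ^ 2)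
  set c' : ℝ := ((K : ℝ) ^ 2 + 1) / 2
  have hc : 0 ≤ c := add_nonneg zero_le_one (div_nonneg (by positivity) (sub_nonneg.mpr hK.le))
  have recursion_ae : ∀ᵐ ω ∂μ, dist (x ω) q ^ 2 ≤ c * R ω + c' * dist (y ω) q ^ 2 := by
    filter_upwards [hR] with ω residual_le
    have image_le : dist (T (y ω)) q ≤ K * dist (y ω) q := by
      simpa only [hq.eq] using hT.toLipschitzWith.dist_le_mul (y ω) q
    calc dist (x ω) q ^ 2 ≤ c * dist (x ω) (T (y ω)) ^ 2 + c' * dist (y ω) q ^ 2 :=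
          dist_sq_le_of_dist_le_mul hK image_le
      _ ≤ c * R ω + c' * dist (y ω) q ^ 2 := by
          linarith only [mul_le_mul_of_nonneg_left residual_le hc]
  calc ∫ ω, dist (x ω) q ^ 2 ∂μ
      ≤ ∫ ω, (c * R ω + c' * dist (y ω) q ^ 2) ∂μ :=
        integral_mono_ae hx ((hRint.const_mul c).add (hy.const_mul c')) recursion_ae
    _ = c * ∫ ω, R ω ∂μ + c' * ∫ ω, dist (y ω) q ^ 2 ∂μ := by
        rw [integral_add (hRint.const_mul c) (hy.const_mul c'), integral_const_mul,
          integral_const_mul]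
    _ ≤ c * ε + c' * ∫ ω, dist (y ω) q ^ 2 ∂μ := by
        linarith only [mul_le_mul_of_nonneg_left hRε hc]

theorem squared_error_one_step_recursion
    {S A : Type*} [Fintype S] [Fintype A] [Nonempty S] [Nonempty A]
    {Ω : Type*} [MeasurableSpace Ω] (μ : Measure Ω) [IsProbabilityMeasure μ]
    (P : S → A → S → ℝ) (hP0 : ∀ s a s', 0 ≤ P s a s') (hP1 : ∀ s a, ∑ s', P s a s' = 1)
    (r : S → A → ℝ) (hr : ∀ s a, |r s a| ≤ 1)
    (γ : ℝ) (hγ : γ ∈ Set.Ioo (0 : ℝ) 1)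
    (Qstar : S × A → ℝ) (hQstar : bellman P r γ Qstar = Qstar)
    (Qprev Qk : Ω → S × A → ℝ) (hQprev : Measurable Qprev) (hQk : Measurable Qk)
    (ε : ℝ) (hε0 : 0 ≤ ε)
    (hmomInt : Integrable (fun ω => sqNorm (fun x => Qk ω x - bellman P r γ (Qprev ω) x)) μ)
    (hmom : ∫ ω, sqNorm (fun x => Qk ω x - bellman P r γ (Qprev ω) x) ∂μ ≤ ε)
    (hintk : Integrable (fun ω => (supNorm (fun x => Qk ω x - Qstar x)) ^ 2) μ)
    (hintp : Integrable (fun ω => (supNorm (fun x => Qprev ω x - Qstar x)) ^ 2) μ) :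
    ∫ ω, (supNorm (fun x => Qk ω x - Qstar x)) ^ 2 ∂μ ≤
      (1 + 2 * γ ^ 2 / (1 - γ ^ 2)) * ε
        + ((γ ^ 2 + 1) / 2) * ∫ ω, (supNorm (fun x => Qprev ω x - Qstar x)) ^ 2 ∂μ := by
  have row_sum_le (s : S) (a : A) : ∑ s', |P s a s'| ≤ 1 := by
    simp only [abs_of_nonneg (hP0 s a _), hP1, le_rfl]
  have hT := contractingWith_bellman row_sum_le r ((abs_of_pos hγ.1).trans_lt hγ.2)
  simp only [supNorm_sub_eq_dist] at hintk hintp ⊢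
  simpa only [coe_nnnorm, Real.norm_eq_abs, sq_abs] using squared_error_one_step_recursion_general
    hT hQstar (.of_forall fun ω => dist_sq_le_sqNorm_sub _ _) hmomInt hmom hintk hintp
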